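/- Interpolation: for 0 < s < 1 and any f with Fourier support in {2j ≠ ±k}, ‖f‖_{E^s} ≤ ‖f‖_{L²}^{1−s} ‖f‖_{E¹}^{s}, where ‖f‖²_{E¹} = Σ_{2j≠±k} |k² − 4j²| |f̂(j,k)|². Consequently, for p > 2 and s(p) = (p−2)/(p−1), ‖f‖_{L^p(Q)} ≤ c(p) ‖f‖_{L²}^{1−s(p)} ‖f‖_{E¹}^{s(p)} (a Gagliardo–Nirenberg type inequality for the d'Alembertian). -/

import Mathlib

open Real Complex MeasureTheory

open scoped NNReal ComplexConjugate

/-!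
The interpolation inequality is Hölder's inequality between the weights `1` and `w = |k² - 4j²|`.
Given an embedding `E^s ⊂ L^p`, it yields the Gagliardo–Nirenberg inequality.

For the embedding, cut a trigonometric polynomial into the dyadic shells `R ≤ w ≤ 2R`. Since
`w = |k - 2j| |k + 2j|`, the sum of `w^(-σ)` converges for `σ > 1`, so a shell contains `O(R^σ)`
frequencies. Interpolating between the trivial `L^∞` bound and Bessel's inequality in `L²`, the
shell has `L^p` norm `O(R^(σ (1/2 - 1/p) - s/2))` times the `E^s` norm. These bounds form a
convergent geometric series once `σ (1 - 2/p) < s`, and `σ > 1` can be so chosen when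
`(p - 2)/p < s`; Fatou's lemma extends the embedding to infinite sums.
-/

section WeightedSums

variable {ι E : Type*} [SeminormedAddGroup E]

theorem summable_rpow_mul_rpow_and_tsum_le {f g : ι → ℝ} (hf : ∀ i, 0 ≤ f i) (hg : ∀ i, 0 ≤ g i)
    (hfs : Summable f) (hgs : Summable g) {s : ℝ} (hs0 : 0 < s) (hs1 : s < 1) :
    Summable (fun i => f i ^ (1 - s) * g i ^ s) ∧
      ∑' i, f i ^ (1 - s) * g i ^ s ≤ (∑' i, f i) ^ (1 - s) * (∑' i, g i) ^ s := by
  have hf_inv : ∀ i, (f i ^ (1 - s)) ^ (1 - s)⁻¹ = f i :=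
    fun i => Real.rpow_rpow_inv (hf i) (sub_pos.2 hs1).ne'
  have hg_inv : ∀ i, (g i ^ s) ^ s⁻¹ = g i := fun i => Real.rpow_rpow_inv (hg i) hs0.ne'
  simpa only [hf_inv, hg_inv, one_div, inv_inv] using
    Real.summable_and_inner_le_Lp_mul_Lq_tsum_of_nonneg
      (Real.HolderConjugate.one_sub_inv_inv hs0 hs1)
      (fun i => Real.rpow_nonneg (hf i) (1 - s)) (fun i => Real.rpow_nonneg (hg i) s)
      (by simpa only [hf_inv]) (by simpa only [hg_inv])

theorem summable_weight_rpow_mul_and_sqrt_tsum_le {w : ι → ℝ} (hw : ∀ i, 0 ≤ w i) {a : ι → E}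
    (ha : Summable fun i => ‖a i‖ ^ 2) (hwa : Summable fun i => w i * ‖a i‖ ^ 2)
    {s : ℝ} (hs0 : 0 < s) (hs1 : s < 1) :
    Summable (fun i => w i ^ s * ‖a i‖ ^ 2) ∧
      √(∑' i, w i ^ s * ‖a i‖ ^ 2) ≤
        √(∑' i, ‖a i‖ ^ 2) ^ (1 - s) * √(∑' i, w i * ‖a i‖ ^ 2) ^ s := by
  have hwa0 : ∀ i, 0 ≤ w i * ‖a i‖ ^ 2 := fun i => mul_nonneg (hw i) (sq_nonneg _)
  have hsplit : ∀ i, (‖a i‖ ^ 2) ^ (1 - s) * (w i * ‖a i‖ ^ 2) ^ s = w i ^ s * ‖a i‖ ^ 2 :=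
    fun i => by
      rw [Real.mul_rpow (hw i) (sq_nonneg _), mul_left_comm,
        ← Real.rpow_add' (sq_nonneg _) (by simp), sub_add_cancel, Real.rpow_one]
  obtain ⟨hsum, hle⟩ :=
    summable_rpow_mul_rpow_and_tsum_le (fun i => sq_nonneg ‖a i‖) hwa0 ha hwa hs0 hs1
  simp only [hsplit] at hsum hle
  refine ⟨hsum, ?_⟩
  have hA : 0 ≤ ∑' i, ‖a i‖ ^ 2 := tsum_nonneg fun i => sq_nonneg ‖a i‖
  have hB : 0 ≤ ∑' i, w i * ‖a i‖ ^ 2 := tsum_nonneg hwa0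
  rw [← Real.rpow_div_two_eq_sqrt _ hA, ← Real.rpow_div_two_eq_sqrt _ hB, Real.sqrt_eq_rpow]
  calc (∑' i, w i ^ s * ‖a i‖ ^ 2) ^ (1 / 2 : ℝ)
      ≤ ((∑' i, ‖a i‖ ^ 2) ^ (1 - s) * (∑' i, w i * ‖a i‖ ^ 2) ^ s) ^ (1 / 2 : ℝ) := by
        gcongr
        exact tsum_nonneg fun i => mul_nonneg (Real.rpow_nonneg (hw i) s) (sq_nonneg _)
    _ = _ := by
        rw [Real.mul_rpow (by positivity) (by positivity), ← Real.rpow_mul hA,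
          ← Real.rpow_mul hB, mul_one_div, mul_one_div]

theorem summable_norm_sq_of_one_le_weight {w : ι → ℝ} {a : ι → E}
    (ha : ∀ i, ‖a i‖ ≠ 0 → 1 ≤ w i) (hwa : Summable fun i => w i * ‖a i‖ ^ 2) :
    Summable fun i => ‖a i‖ ^ 2 := by
  refine hwa.of_nonneg_of_le (fun i => sq_nonneg _) fun i => ?_
  rcases eq_or_ne ‖a i‖ 0 with h | h
  · simp [h]
  · exact le_mul_of_one_le_left (sq_nonneg _) (ha i h)

theorem card_le_rpow_mul_sum_rpow_neg {T : Finset ι} {w : ι → ℝ} {R σ : ℝ} (hσ : 0 ≤ σ)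
    (hw : ∀ i ∈ T, 0 < w i) (hwR : ∀ i ∈ T, w i ≤ R) :
    (T.card : ℝ) ≤ R ^ σ * ∑ i ∈ T, w i ^ (-σ) := by
  rw [Finset.cast_card, Finset.mul_sum]
  refine Finset.sum_le_sum fun i hi => ?_
  have hwi := hw i hi
  calc (1 : ℝ) = w i ^ σ * w i ^ (-σ) := by rw [← Real.rpow_add hwi, add_neg_cancel, Real.rpow_zero]
    _ ≤ R ^ σ * w i ^ (-σ) := by gcongr; exact hwR i hi

theorem sqrt_sum_norm_sq_le_of_le_weight {T : Finset ι} {w : ι → ℝ} {R s : ℝ} (hR : 0 < R)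
    (hs : 0 ≤ s) (hw : ∀ i ∈ T, R ≤ w i) (a : ι → E) :
    √(∑ i ∈ T, ‖a i‖ ^ 2) ≤ R ^ (-(s / 2)) * √(∑ i ∈ T, w i ^ s * ‖a i‖ ^ 2) := by
  have hterm : ∀ i ∈ T, ‖a i‖ ^ 2 ≤ R ^ (-s) * (w i ^ s * ‖a i‖ ^ 2) := fun i hi => by
    rw [← mul_assoc, Real.rpow_neg hR.le]
    refine le_mul_of_one_le_left (sq_nonneg _) ?_
    rw [← div_eq_inv_mul, one_le_div (Real.rpow_pos_of_pos hR s)]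
    exact Real.rpow_le_rpow hR.le (hw i hi) hs
  calc √(∑ i ∈ T, ‖a i‖ ^ 2) ≤ √(R ^ (-s) * ∑ i ∈ T, w i ^ s * ‖a i‖ ^ 2) := by
        rw [Finset.mul_sum]
        exact Real.sqrt_le_sqrt (Finset.sum_le_sum hterm)
    _ = R ^ (-(s / 2)) * √(∑ i ∈ T, w i ^ s * ‖a i‖ ^ 2) := by
        rw [Real.sqrt_mul (by positivity), Real.sqrt_eq_rpow, ← Real.rpow_mul hR.le, neg_mul,
          mul_one_div]

end WeightedSums

section Lp

variable {α ι E : Type*} {mα : MeasurableSpace α} {μ : Measure α} [NormedAddCommGroup E]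

theorem eLpNorm_le_eLpNormEssSup_rpow_mul_eLpNorm_rpow {f : α → E}
    (hf : AEStronglyMeasurable f μ) {r p : ℝ} (hr : 0 < r) (hrp : r ≤ p) :
    eLpNorm f (.ofReal p) μ ≤
      eLpNormEssSup f μ ^ (1 - r / p) * eLpNorm f (.ofReal r) μ ^ (r / p) := by
  have hp : 0 < p := hr.trans_le hrp
  have heLpNorm : ∀ q : ℝ, 0 < q →
      eLpNorm f (.ofReal q) μ = (∫⁻ x, ‖f x‖ₑ ^ q ∂μ) ^ (1 / q) := fun q hq => by
    rw [eLpNorm_eq_lintegral_rpow_enorm_toReal (by simpa using hq) ENNReal.ofReal_ne_top,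
      ENNReal.toReal_ofReal hq.le]
  set M := eLpNormEssSup f μ
  have hpow : ∫⁻ x, ‖f x‖ₑ ^ p ∂μ ≤ M ^ (p - r) * ∫⁻ x, ‖f x‖ₑ ^ r ∂μ := by
    rw [← lintegral_const_mul'' _ (hf.enorm.pow_const r)]
    refine lintegral_mono_ae ?_
    filter_upwards [ae_le_eLpNormEssSup (f := f) (μ := μ)] with x hx
    calc ‖f x‖ₑ ^ p = ‖f x‖ₑ ^ (p - r) * ‖f x‖ₑ ^ r := by
          rw [← ENNReal.rpow_add_of_nonneg _ _ (sub_nonneg.2 hrp) hr.le, sub_add_cancel]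
      _ ≤ M ^ (p - r) * ‖f x‖ₑ ^ r := by gcongr
  rw [heLpNorm p hp, heLpNorm r hr]
  calc (∫⁻ x, ‖f x‖ₑ ^ p ∂μ) ^ (1 / p)
      ≤ (M ^ (p - r) * ∫⁻ x, ‖f x‖ₑ ^ r ∂μ) ^ (1 / p) := by gcongr
    _ = _ := by
        rw [ENNReal.mul_rpow_of_nonneg _ _ (by positivity), ← ENNReal.rpow_mul,
          ← ENNReal.rpow_mul]
        congr 2 <;> field_simp

theorem integral_norm_rpow_le_of_eLpNorm_le {f : α → E} {p B : ℝ} (hp : 0 < p) (hB : 0 ≤ B)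
    (h : eLpNorm f (.ofReal p) μ ≤ .ofReal B) : ∫ x, ‖f x‖ ^ p ∂μ ≤ B ^ p := by
  rw [eLpNorm_eq_lintegral_rpow_enorm_toReal (by simpa using hp) ENNReal.ofReal_ne_top,
      ENNReal.toReal_ofReal hp.le, one_div, ENNReal.rpow_inv_le_iff hp,
      ENNReal.ofReal_rpow_of_nonneg hB hp.le] at h
  have henorm : ∀ x, ENNReal.ofReal ‖‖f x‖ ^ p‖ = ‖f x‖ₑ ^ p := fun x => by
    rw [ofReal_norm, Real.enorm_rpow_of_nonneg (norm_nonneg _) hp.le, enorm_norm]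
  refine (Real.le_norm_self _).trans ((norm_integral_le_lintegral_norm _).trans ?_)
  simp only [henorm]
  exact ENNReal.toReal_le_of_le_ofReal (by positivity) h

theorem integral_norm_sum_sq_of_orthogonal {𝕜 : Type*} [RCLike 𝕜] {f : ι → α → 𝕜}
    (hf : ∀ i, MemLp (f i) 2 μ) (horth : Pairwise fun i j => ∫ x, f i x * conj (f j x) ∂μ = 0)
    (T : Finset ι) :
    ∫ x, ‖∑ i ∈ T, f i x‖ ^ 2 ∂μ = ∑ i ∈ T, ∫ x, ‖f i x‖ ^ 2 ∂μ := by
  classical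
  have hint : ∀ i j, Integrable (fun x => f i x * conj (f j x)) μ :=
    fun i j => (hf i).integrable_mul (hf j).star
  rw [← RCLike.ofReal_inj (K := 𝕜), ← integral_ofReal]
  push_cast
  simp only [← RCLike.mul_conj, map_sum, Finset.sum_mul_sum]
  rw [integral_finsetSum _ fun i _ => integrable_finsetSum _ fun j _ => hint i j]
  refine Finset.sum_congr rfl fun i hi => ?_
  rw [integral_finsetSum _ fun j _ => hint i j, Finset.sum_eq_single_of_mem i hi
    fun j _ hji => horth hji.symm]
  simp only [RCLike.mul_conj, ← RCLike.ofReal_pow, integral_ofReal]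

theorem eLpNorm_sum_le_of_dyadic_decay {g : ι → α → E} (hg : ∀ i, AEStronglyMeasurable (g i) μ)
    {p C δ : ℝ} (hp : 1 ≤ p) (hC : 0 ≤ C) (hδ : 0 < δ) {w : ι → ℝ} {T : Finset ι}
    (hw : ∀ i ∈ T, 1 ≤ w i)
    (hdecay : ∀ R > 0, ∀ S ⊆ T, (∀ i ∈ S, R ≤ w i ∧ w i ≤ 2 * R) →
      eLpNorm (fun x => ∑ i ∈ S, g i x) (.ofReal p) μ ≤ .ofReal (C * R ^ (-δ))) :
    eLpNorm (fun x => ∑ i ∈ T, g i x) (.ofReal p) μ ≤ .ofReal (C * (1 - 2 ^ (-δ))⁻¹) := by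
  have hlevel : ∀ i, ∃ n : ℕ, i ∈ T → 2 ^ n ≤ w i ∧ w i < 2 ^ (n + 1) := fun i => by
    by_cases hi : i ∈ T
    · obtain ⟨n, hn⟩ := exists_nat_pow_near (hw i hi) one_lt_two
      exact ⟨n, fun _ => hn⟩
    · exact ⟨0, fun h => absurd h hi⟩
  choose level hlevel using hlevel
  set r : ℝ := 2 ^ (-δ) with hr
  have hr0 : 0 ≤ r := by positivity
  have hr1 : r < 1 := Real.rpow_lt_one_of_one_lt_of_neg one_lt_two (neg_neg_of_pos hδ)
  have hshell : ∀ n, eLpNorm (fun x => ∑ i ∈ T with level i = n, g i x) (.ofReal p) μ ≤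
      .ofReal (C * r ^ n) := fun n => by
    rw [hr, ← Real.rpow_mul_natCast zero_le_two, mul_comm, mul_comm (-δ),
      Real.rpow_natCast_mul zero_le_two, mul_comm]
    refine hdecay _ (by positivity) _ (Finset.filter_subset _ _) fun i hi => ?_
    obtain ⟨hiT, rfl⟩ := Finset.mem_filter.1 hi
    rw [← pow_succ']
    exact ⟨(hlevel i hiT).1, (hlevel i hiT).2.le⟩
  calc eLpNorm (fun x => ∑ i ∈ T, g i x) (.ofReal p) μ
      = eLpNorm (∑ n ∈ T.image level, fun x => ∑ i ∈ T with level i = n, g i x) (.ofReal p) μ := by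
        congr 1
        ext x
        rw [Finset.sum_apply,
          Finset.sum_fiberwise_of_maps_to fun i hi => Finset.mem_image_of_mem level hi]
    _ ≤ ∑ n ∈ T.image level, .ofReal (C * r ^ n) :=
        (eLpNorm_sum_le (fun n _ => Finset.aestronglyMeasurable_fun_sum _ fun i _ => hg i)
          (ENNReal.one_le_ofReal.2 hp)).trans (Finset.sum_le_sum fun n _ => hshell n)
    _ = .ofReal (C * ∑ n ∈ T.image level, r ^ n) := by
        rw [← ENNReal.ofReal_sum_of_nonneg fun n _ => by positivity, Finset.mul_sum]
    _ ≤ .ofReal (C * (1 - r)⁻¹) := by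
        rw [← tsum_geometric_of_lt_one hr0 hr1]
        gcongr
        exact (summable_geometric_of_lt_one hr0 hr1).sum_le_tsum _ fun n _ => by positivity

end Lp

/-- A system of functions bounded by `1` which satisfies the Bessel-type inequality
`‖∑ a i • φ i‖_{L²} ≤ N (∑ ‖a i‖²)^{1/2}` for finite sums. -/
structure IsBoundedBesselSystem {α ι 𝕜 : Type*} [MeasurableSpace α] [NormedField 𝕜]
    (φ : ι → α → 𝕜) (μ : Measure α) (N : ℝ≥0) : Prop where
  aestronglyMeasurable : ∀ i, AEStronglyMeasurable (φ i) μ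
  norm_le_one : ∀ i x, ‖φ i x‖ ≤ 1
  eLpNorm_sum_le : ∀ (T : Finset ι) (a : ι → 𝕜),
    eLpNorm (fun x => ∑ i ∈ T, a i * φ i x) 2 μ ≤ .ofReal (N * √(∑ i ∈ T, ‖a i‖ ^ 2))

theorem isBoundedBesselSystem_of_orthogonal {α ι 𝕜 : Type*} [MeasurableSpace α] [RCLike 𝕜]
    {φ : ι → α → 𝕜} {μ : Measure α} [IsFiniteMeasure μ]
    (hφ : ∀ i, AEStronglyMeasurable (φ i) μ) (hφ1 : ∀ i x, ‖φ i x‖ ≤ 1)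
    (horth : Pairwise fun i j => ∫ x, φ i x * conj (φ j x) ∂μ = 0) :
    IsBoundedBesselSystem φ μ (NNReal.sqrt (measureUnivNNReal μ)) where
  aestronglyMeasurable := hφ
  norm_le_one := hφ1
  eLpNorm_sum_le T a := by
    have hL2 : ∀ i, MemLp (fun x => a i * φ i x) 2 μ := fun i =>
      (MemLp.of_bound (hφ i) 1 (.of_forall (hφ1 i))).const_mul (a i)
    have horth_mul : Pairwise fun i j => ∫ x, a i * φ i x * conj (a j * φ j x) ∂μ = 0 :=
      fun i j hij => by
        have hfactor : ∀ x, a i * φ i x * conj (a j * φ j x) =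
            a i * conj (a j) * (φ i x * conj (φ j x)) := fun x => by
          rw [map_mul, mul_mul_mul_comm]
        simp only [hfactor, integral_const_mul, horth hij, mul_zero]
    have hterm : ∀ i, ∫ x, ‖a i * φ i x‖ ^ 2 ∂μ ≤ ‖a i‖ ^ 2 * μ.real Set.univ := fun i => by
      rw [mul_comm, ← smul_eq_mul, ← integral_const]
      refine integral_mono ((memLp_two_iff_integrable_sq_norm (hL2 i).1).1 (hL2 i))
        (integrable_const _) fun x => ?_
      beta_reduce
      gcongr
      rw [norm_mul]
      exact mul_le_of_le_one_right (norm_nonneg _) (hφ1 i x)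
    rw [(memLp_finsetSum T fun i _ => hL2 i).eLpNorm_eq_integral_rpow_norm two_ne_zero
      ENNReal.ofNat_ne_top]
    refine ENNReal.ofReal_le_ofReal ?_
    simp only [ENNReal.toReal_ofNat, Real.rpow_ofNat]
    rw [← one_div, ← Real.sqrt_eq_rpow, integral_norm_sum_sq_of_orthogonal hL2 horth_mul,
      Real.coe_sqrt, ← Real.sqrt_mul (NNReal.coe_nonneg _), mul_comm, Finset.sum_mul]
    exact Real.sqrt_le_sqrt (Finset.sum_le_sum fun i _ => hterm i)

namespace IsBoundedBesselSystem

variable {α ι 𝕜 : Type*} {mα : MeasurableSpace α} {μ : Measure α} [NormedField 𝕜]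
  {φ : ι → α → 𝕜} {N : ℝ≥0} {p : ℝ}

theorem aestronglyMeasurable_sum (hφ : IsBoundedBesselSystem φ μ N) (T : Finset ι) (a : ι → 𝕜) :
    AEStronglyMeasurable (fun x => ∑ i ∈ T, a i * φ i x) μ :=
  Finset.aestronglyMeasurable_fun_sum T fun i _ => (hφ.aestronglyMeasurable i).const_mul (a i)

theorem eLpNormEssSup_sum_le (hφ : IsBoundedBesselSystem φ μ N) (T : Finset ι) (a : ι → 𝕜) :
    eLpNormEssSup (fun x => ∑ i ∈ T, a i * φ i x) μ ≤
      .ofReal (√T.card * √(∑ i ∈ T, ‖a i‖ ^ 2)) := by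
  refine eLpNormEssSup_le_of_ae_bound (.of_forall fun x => ?_)
  calc ‖∑ i ∈ T, a i * φ i x‖ ≤ ∑ i ∈ T, ‖a i‖ := norm_sum_le_of_le T fun i _ => by
        rw [norm_mul]
        exact mul_le_of_le_one_right (norm_nonneg _) (hφ.norm_le_one i x)
    _ ≤ √(T.card * ∑ i ∈ T, ‖a i‖ ^ 2) := Real.le_sqrt_of_sq_le sq_sum_le_card_mul_sum_sq
    _ = √T.card * √(∑ i ∈ T, ‖a i‖ ^ 2) := Real.sqrt_mul (Nat.cast_nonneg _) _

theorem eLpNorm_sum_le_card_rpow_mul (hφ : IsBoundedBesselSystem φ μ N) (hp : 2 ≤ p)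
    (T : Finset ι) (a : ι → 𝕜) :
    eLpNorm (fun x => ∑ i ∈ T, a i * φ i x) (.ofReal p) μ ≤
      .ofReal (N ^ (2 / p) * (T.card : ℝ) ^ (1 / 2 - 1 / p) * √(∑ i ∈ T, ‖a i‖ ^ 2)) := by
  have hp0 : 0 < p := by linarith
  have h2p : 0 ≤ 1 - 2 / p := sub_nonneg.2 ((div_le_one hp0).2 hp)
  have hL2 := hφ.eLpNorm_sum_le T a
  rw [← ENNReal.ofReal_ofNat] at hL2
  set A := √(∑ i ∈ T, ‖a i‖ ^ 2)
  have hA : 0 ≤ A := Real.sqrt_nonneg _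
  calc eLpNorm (fun x => ∑ i ∈ T, a i * φ i x) (.ofReal p) μ
      ≤ .ofReal (√T.card * A) ^ (1 - 2 / p) * .ofReal (N * A) ^ (2 / p) :=
        (eLpNorm_le_eLpNormEssSup_rpow_mul_eLpNorm_rpow (hφ.aestronglyMeasurable_sum T a)
          two_pos hp).trans (by gcongr; exact hφ.eLpNormEssSup_sum_le T a)
    _ = .ofReal ((√T.card * A) ^ (1 - 2 / p) * (N * A) ^ (2 / p)) := by
        rw [ENNReal.ofReal_rpow_of_nonneg (by positivity) h2p,
          ENNReal.ofReal_rpow_of_nonneg (by positivity) (by positivity),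
          ENNReal.ofReal_mul (by positivity)]
    _ = .ofReal (N ^ (2 / p) * √T.card ^ (1 - 2 / p) * (A ^ (1 - 2 / p) * A ^ (2 / p))) := by
        rw [Real.mul_rpow (Real.sqrt_nonneg _) hA, Real.mul_rpow N.coe_nonneg hA]
        ring_nf
    _ = .ofReal (N ^ (2 / p) * (T.card : ℝ) ^ (1 / 2 - 1 / p) * A) := by
        rw [← Real.rpow_add' hA (by simp), sub_add_cancel, Real.rpow_one,
          ← Real.rpow_div_two_eq_sqrt _ (Nat.cast_nonneg _)]
        ring_nf

theorem eLpNorm_sum_le_of_dyadic (hφ : IsBoundedBesselSystem φ μ N) (hp : 2 ≤ p)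
    {w : ι → ℝ} {R s σ K E : ℝ} (hR : 0 < R) (hs : 0 ≤ s) (hσ : 0 ≤ σ) {T : Finset ι}
    (hRw : ∀ i ∈ T, R ≤ w i) (hwR : ∀ i ∈ T, w i ≤ 2 * R) (hK : ∑ i ∈ T, w i ^ (-σ) ≤ K)
    {a : ι → 𝕜} (hE : √(∑ i ∈ T, w i ^ s * ‖a i‖ ^ 2) ≤ E) :
    eLpNorm (fun x => ∑ i ∈ T, a i * φ i x) (.ofReal p) μ ≤
      .ofReal (N ^ (2 / p) * (2 ^ σ * K) ^ (1 / 2 - 1 / p) * E *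
        R ^ (-(s / 2 - σ * (1 / 2 - 1 / p)))) := by
  have hw : ∀ i ∈ T, 0 < w i := fun i hi => hR.trans_le (hRw i hi)
  have hγ : 0 ≤ 1 / 2 - 1 / p := sub_nonneg.2 (one_div_le_one_div_of_le two_pos hp)
  have : 0 ≤ E := (Real.sqrt_nonneg _).trans hE
  have hK0 : 0 ≤ K := (Finset.sum_nonneg fun i hi => Real.rpow_nonneg (hw i hi).le _).trans hK
  have hcard : (T.card : ℝ) ≤ R ^ σ * (2 ^ σ * K) :=
    calc (T.card : ℝ) ≤ (2 * R) ^ σ * ∑ i ∈ T, w i ^ (-σ) := card_le_rpow_mul_sum_rpow_neg hσ hw hwR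
      _ ≤ (2 * R) ^ σ * K := by gcongr
      _ = R ^ σ * (2 ^ σ * K) := by rw [Real.mul_rpow zero_le_two hR.le]; ring
  have hnorm : √(∑ i ∈ T, ‖a i‖ ^ 2) ≤ R ^ (-(s / 2)) * E :=
    (sqrt_sum_norm_sq_le_of_le_weight hR hs hRw a).trans (by gcongr)
  refine (hφ.eLpNorm_sum_le_card_rpow_mul hp T a).trans (ENNReal.ofReal_le_ofReal ?_)
  calc N ^ (2 / p) * (T.card : ℝ) ^ (1 / 2 - 1 / p) * √(∑ i ∈ T, ‖a i‖ ^ 2)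
      ≤ N ^ (2 / p) * (R ^ σ * (2 ^ σ * K)) ^ (1 / 2 - 1 / p) * (R ^ (-(s / 2)) * E) := by gcongr
    _ = N ^ (2 / p) * (2 ^ σ * K) ^ (1 / 2 - 1 / p) * E *
          (R ^ (σ * (1 / 2 - 1 / p)) * R ^ (-(s / 2))) := by
        rw [Real.mul_rpow (by positivity) (by positivity), ← Real.rpow_mul hR.le]
        ring
    _ = _ := by
        rw [← Real.rpow_add hR]
        ring_nf

theorem exists_eLpNorm_sum_le_weighted (hφ : IsBoundedBesselSystem φ μ N) (hp : 2 ≤ p)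
    {w : ι → ℝ} (hw : ∀ i, 0 ≤ w i) {σ s : ℝ} (hσ : 0 ≤ σ) (hwσ : Summable fun i => w i ^ (-σ))
    (hs : σ * (1 - 2 / p) < s) :
    ∃ C > 0, ∀ (T : Finset ι) (a : ι → 𝕜), (∀ i ∈ T, 1 ≤ w i) →
      eLpNorm (fun x => ∑ i ∈ T, a i * φ i x) (.ofReal p) μ ≤
        .ofReal (C * √(∑ i ∈ T, w i ^ s * ‖a i‖ ^ 2)) := by
  have hp0 : 0 < p := by linarith
  have h2p : 0 ≤ 1 - 2 / p := sub_nonneg.2 ((div_le_one hp0).2 hp)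
  have hδ : 0 < s / 2 - σ * (1 / 2 - 1 / p) := by
    have : σ * (1 - 2 / p) = 2 * (σ * (1 / 2 - 1 / p)) := by ring
    linarith
  set δ := s / 2 - σ * (1 / 2 - 1 / p)
  have hr1 : (2 : ℝ) ^ (-δ) < 1 := Real.rpow_lt_one_of_one_lt_of_neg one_lt_two (neg_neg_of_pos hδ)
  set K := ∑' i, w i ^ (-σ)
  have hK : 0 ≤ K := tsum_nonneg fun i => Real.rpow_nonneg (hw i) _
  set D := N ^ (2 / p) * (2 ^ σ * K) ^ (1 / 2 - 1 / p)
  have : 0 < (1 - (2 : ℝ) ^ (-δ))⁻¹ := inv_pos.2 (sub_pos.2 hr1)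
  refine ⟨D * (1 - 2 ^ (-δ))⁻¹ + 1, by positivity, fun T a hwT => ?_⟩
  set A := √(∑ i ∈ T, w i ^ s * ‖a i‖ ^ 2)
  have hshell : ∀ R > 0, ∀ S ⊆ T, (∀ i ∈ S, R ≤ w i ∧ w i ≤ 2 * R) →
      eLpNorm (fun x => ∑ i ∈ S, a i * φ i x) (.ofReal p) μ ≤ .ofReal (D * A * R ^ (-δ)) :=
    fun R hR S hST hS => hφ.eLpNorm_sum_le_of_dyadic hp hR
      ((mul_nonneg hσ h2p).trans hs.le) hσ (fun i hi => (hS i hi).1) (fun i hi => (hS i hi).2)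
      (hwσ.sum_le_tsum S fun i _ => Real.rpow_nonneg (hw i) _)
      (Real.sqrt_le_sqrt <| Finset.sum_le_sum_of_subset_of_nonneg hST fun i _ _ =>
        mul_nonneg (Real.rpow_nonneg (hw i) s) (sq_nonneg _))
  calc eLpNorm (fun x => ∑ i ∈ T, a i * φ i x) (.ofReal p) μ
      ≤ .ofReal (D * A * (1 - 2 ^ (-δ))⁻¹) :=
        eLpNorm_sum_le_of_dyadic_decay (fun i => (hφ.aestronglyMeasurable i).const_mul (a i))
          (one_le_two.trans hp) (by positivity) hδ hwT hshell
    _ ≤ .ofReal ((D * (1 - 2 ^ (-δ))⁻¹ + 1) * A) := by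
        refine ENNReal.ofReal_le_ofReal ?_
        rw [mul_right_comm]
        gcongr
        linarith

theorem exists_eLpNorm_le_weighted [Countable ι] (hφ : IsBoundedBesselSystem φ μ N) (hp : 2 ≤ p)
    {w : ι → ℝ} (hw : ∀ i, 0 ≤ w i) {σ s : ℝ} (hσ : 0 ≤ σ) (hwσ : Summable fun i => w i ^ (-σ))
    (hs : σ * (1 - 2 / p) < s) :
    ∃ C > 0, ∀ a : ι → 𝕜, (∀ i, a i ≠ 0 → 1 ≤ w i) →
      Summable (fun i => w i ^ s * ‖a i‖ ^ 2) →
      ∀ f : α → 𝕜, (∀ᵐ x ∂μ, HasSum (fun i => a i * φ i x) (f x)) →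
        eLpNorm f (.ofReal p) μ ≤ .ofReal (C * √(∑' i, w i ^ s * ‖a i‖ ^ 2)) := by
  classical
  obtain ⟨C, hC, hfinite⟩ := hφ.exists_eLpNorm_sum_le_weighted hp hw hσ hwσ hs
  refine ⟨C, hC, fun a ha has f hf => ?_⟩
  refine Lp.eLpNorm_le_of_ae_tendsto (u := Filter.atTop) (.of_forall fun T => ?_)
    (fun T => hφ.aestronglyMeasurable_sum T a) hf
  calc eLpNorm (fun x => ∑ i ∈ T, a i * φ i x) (.ofReal p) μ
      = eLpNorm (fun x => ∑ i ∈ T with a i ≠ 0, a i * φ i x) (.ofReal p) μ := by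
        congr 1
        ext x
        exact (Finset.sum_filter_of_ne fun i _ hi => left_ne_zero_of_mul hi).symm
    _ ≤ .ofReal (C * √(∑ i ∈ T with a i ≠ 0, w i ^ s * ‖a i‖ ^ 2)) :=
        hfinite _ a fun i hi => ha i (Finset.mem_filter.1 hi).2
    _ ≤ .ofReal (C * √(∑' i, w i ^ s * ‖a i‖ ^ 2)) := by
        gcongr
        exact has.sum_le_tsum _ fun i _ => mul_nonneg (Real.rpow_nonneg (hw i) s) (sq_nonneg _)

theorem exists_eLpNorm_le_rpow_mul_rpow [Countable ι] (hφ : IsBoundedBesselSystem φ μ N)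
    (hp : 2 ≤ p) {w : ι → ℝ} (hw : ∀ i, 0 ≤ w i) {σ θ : ℝ} (hσ : 0 ≤ σ)
    (hwσ : Summable fun i => w i ^ (-σ)) (hθ : σ * (1 - 2 / p) < θ) (hθ1 : θ < 1) :
    ∃ C > 0, ∀ a : ι → 𝕜, (∀ i, a i ≠ 0 → 1 ≤ w i) →
      Summable (fun i => w i * ‖a i‖ ^ 2) →
      ∀ f : α → 𝕜, (∀ᵐ x ∂μ, HasSum (fun i => a i * φ i x) (f x)) →
        eLpNorm f (.ofReal p) μ ≤
          .ofReal (C * √(∑' i, ‖a i‖ ^ 2) ^ (1 - θ) * √(∑' i, w i * ‖a i‖ ^ 2) ^ θ) := by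
  have h2p : 0 ≤ 1 - 2 / p := sub_nonneg.2 ((div_le_one (by linarith)).2 hp)
  obtain ⟨C, hC, hembed⟩ := hφ.exists_eLpNorm_le_weighted hp hw hσ hwσ hθ
  refine ⟨C, hC, fun a ha hwa f hf => ?_⟩
  obtain ⟨hwθa, hinterp⟩ := summable_weight_rpow_mul_and_sqrt_tsum_le hw
    (summable_norm_sq_of_one_le_weight (fun i hi => ha i (norm_ne_zero_iff.1 hi)) hwa) hwa
    ((mul_nonneg hσ h2p).trans_lt hθ) hθ1
  refine (hembed a ha hwθa f hf).trans (ENNReal.ofReal_le_ofReal ?_)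
  rw [mul_assoc]
  gcongr

end IsBoundedBesselSystem

/-- The absolute value `|k² - 4j²|` of the symbol of the d'Alembertian at the frequency
`q = (j, k)`, i.e. at the mode `exp (i (2jx + kt))`. -/
def dalembertWeight (q : ℤ × ℤ) : ℝ := ((|q.2 ^ 2 - 4 * q.1 ^ 2| : ℤ) : ℝ)

theorem dalembertWeight_eq_mul (q : ℤ × ℤ) :
    dalembertWeight q = |((q.2 - 2 * q.1 : ℤ) : ℝ)| * |((q.2 + 2 * q.1 : ℤ) : ℝ)| := by
  rw [dalembertWeight, ← abs_mul, ← Int.cast_mul, ← Int.cast_abs]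
  ring_nf

theorem dalembertWeight_nonneg (q : ℤ × ℤ) : 0 ≤ dalembertWeight q :=
  Int.cast_nonneg (abs_nonneg _)

theorem one_le_dalembertWeight {j k : ℤ} (h : ¬(2 * j = k ∨ 2 * j = -k)) :
    1 ≤ dalembertWeight (j, k) := by
  refine Int.cast_one_le_of_pos (abs_pos.2 fun h0 => h ?_)
  exact sq_eq_sq_iff_eq_or_eq_neg.1 (by linear_combination -h0)

-- On the characteristic lines `2j = ±k` the summand is `0 ^ (-σ) = 0`.
theorem summable_dalembertWeight_rpow {σ : ℝ} (hσ : 1 < σ) :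
    Summable fun q => dalembertWeight q ^ (-σ) := by
  have hint := Real.summable_abs_int_rpow hσ
  have hprod : Summable fun r : ℤ × ℤ => |(r.1 : ℝ)| ^ (-σ) * |(r.2 : ℝ)| ^ (-σ) :=
    hint.mul_of_nonneg hint (fun _ => by positivity) (fun _ => by positivity)
  have hinj : Function.Injective fun q : ℤ × ℤ => (q.2 - 2 * q.1, q.2 + 2 * q.1) := by
    rintro ⟨j, k⟩ ⟨j', k'⟩ h
    simp only [Prod.mk.injEq] at h ⊢
    omega
  refine (hprod.comp_injective hinj).congr fun q => ?_
  rw [dalembertWeight_eq_mul, Real.mul_rpow (abs_nonneg _) (abs_nonneg _), Function.comp_apply]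

/-- The exponential `exp (i (2jx + kt))` of frequency `q = (j, k)` at the point `z = (x, t)`. -/
noncomputable def torusMode (q : ℤ × ℤ) (z : ℝ × ℝ) : ℂ :=
  Complex.exp (Complex.I * (2 * q.1 * z.1 + q.2 * z.2))

theorem norm_torusMode (q : ℤ × ℤ) (z : ℝ × ℝ) : ‖torusMode q z‖ = 1 := by
  rw [torusMode, mul_comm]
  exact_mod_cast Complex.norm_exp_ofReal_mul_I (2 * q.1 * z.1 + q.2 * z.2)

theorem continuous_torusMode (q : ℤ × ℤ) : Continuous (torusMode q) := by
  unfold torusMode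
  fun_prop

theorem torusMode_mul_conj (q r : ℤ × ℤ) (z : ℝ × ℝ) :
    torusMode q z * conj (torusMode r z) = torusMode (q - r) z := by
  simp only [torusMode, ← Complex.exp_conj, ← Complex.exp_add, map_mul, map_add, Complex.conj_I,
    Complex.conj_ofReal, map_ofNat, map_intCast, Prod.fst_sub, Prod.snd_sub, Int.cast_sub]
  ring_nf

/-- The rectangle `Q = [0, π] × [0, 2π]`, a common period cell of the functions `torusMode q`. -/
abbrev periodCell : Set (ℝ × ℝ) := Set.Icc 0 π ×ˢ Set.Icc 0 (2 * π)

instance isFiniteMeasure_restrict_periodCell : IsFiniteMeasure (volume.restrict periodCell) :=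
  isFiniteMeasure_restrict.2 (isCompact_Icc.prod isCompact_Icc).measure_lt_top.ne

theorem integral_exp_I_mul_eq_zero {n : ℤ} (hn : n ≠ 0) {b c : ℝ} (hb : 0 ≤ b) (hc : c ≠ 0)
    (hbc : b * c = 2 * π) : ∫ x in Set.Icc 0 b, Complex.exp (Complex.I * (c * n * x)) = 0 := by
  have hperiod : Complex.I * (c * n) * b = n * (2 * π * Complex.I) := by
    have hbc' : (b * c : ℂ) = 2 * π := mod_cast hbc
    linear_combination Complex.I * n * hbc'
  have hfreq : Complex.I * (c * n) ≠ 0 :=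
    mul_ne_zero Complex.I_ne_zero (mul_ne_zero (mod_cast hc) (mod_cast hn))
  have hassoc : ∀ x : ℝ, Complex.I * (c * n * x) = Complex.I * (c * n) * x :=
    fun x => (mul_assoc _ _ _).symm
  simp only [hassoc]
  rw [integral_Icc_eq_integral_Ioc, ← intervalIntegral.integral_of_le hb,
    integral_exp_mul_complex hfreq, hperiod, Complex.exp_int_mul_two_pi_mul_I]
  simp

theorem integral_torusMode_eq_zero {q : ℤ × ℤ} (hq : q ≠ 0) :
    ∫ z in periodCell, torusMode q z = 0 := by
  have hsplit : ∀ z : ℝ × ℝ, torusMode q z =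
      Complex.exp (Complex.I * ((2 : ℝ) * q.1 * z.1)) *
        Complex.exp (Complex.I * ((1 : ℝ) * q.2 * z.2)) := fun z => by
    rw [torusMode, ← Complex.exp_add, ← mul_add]
    push_cast
    ring_nf
  simp only [hsplit]
  rw [Measure.volume_eq_prod, setIntegral_prod_mul
    (fun x : ℝ => Complex.exp (Complex.I * ((2 : ℝ) * q.1 * x)))
    (fun t : ℝ => Complex.exp (Complex.I * ((1 : ℝ) * q.2 * t)))]
  by_cases h1 : q.1 = 0
  · have h2 : q.2 ≠ 0 := fun h2 => hq (Prod.ext h1 h2)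
    rw [integral_exp_I_mul_eq_zero h2 (by positivity) one_ne_zero (mul_one _), mul_zero]
  · rw [integral_exp_I_mul_eq_zero h1 Real.pi_nonneg two_ne_zero (mul_comm _ _), zero_mul]

theorem isBoundedBesselSystem_torusMode :
    IsBoundedBesselSystem torusMode (volume.restrict periodCell)
      (NNReal.sqrt (measureUnivNNReal (volume.restrict periodCell))) :=
  isBoundedBesselSystem_of_orthogonal
    (fun q => (continuous_torusMode q).aestronglyMeasurable)
    (fun q z => (norm_torusMode q z).le)
    fun q r hqr => by
      simpa only [torusMode_mul_conj] using integral_torusMode_eq_zero (sub_ne_zero.2 hqr)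

theorem exists_eLpNorm_tsum_torusMode_le {p θ : ℝ} (hp : 2 < p) (hθ : (p - 2) / p < θ)
    (hθ1 : θ < 1) :
    ∃ C > 0, ∀ a : ℤ × ℤ → ℂ, (∀ q, a q ≠ 0 → 1 ≤ dalembertWeight q) →
      Summable (fun q => dalembertWeight q * ‖a q‖ ^ 2) →
      eLpNorm (fun z => ∑' q, a q * torusMode q z) (.ofReal p) (volume.restrict periodCell) ≤
        .ofReal (C * √(∑' q, ‖a q‖ ^ 2) ^ (1 - θ) *
          √(∑' q, dalembertWeight q * ‖a q‖ ^ 2) ^ θ) := by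
  have hp0 : 0 < p := by linarith
  have hpos : 0 < 1 - 2 / p := sub_pos.2 ((div_lt_one hp0).2 hp)
  have hθ' : 1 < θ / (1 - 2 / p) := by
    rwa [one_lt_div hpos, ← div_self hp0.ne', ← sub_div]
  obtain ⟨σ, hσ1, hσ⟩ := exists_between hθ'
  obtain ⟨C, hC, hGN⟩ := isBoundedBesselSystem_torusMode.exists_eLpNorm_le_rpow_mul_rpow hp.le
    dalembertWeight_nonneg (by linarith) (summable_dalembertWeight_rpow hσ1)
    ((lt_div_iff₀ hpos).1 hσ) hθ1
  refine ⟨C, hC, fun a ha hwa => ?_⟩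
  have hsummable : ∀ z, Summable (fun q => a q * torusMode q z) ↔ Summable a := fun z => by
    simp only [← summable_norm_iff (f := a),
      ← summable_norm_iff (f := fun q => a q * torusMode q z), norm_mul, norm_torusMode, mul_one]
  by_cases has : Summable a
  · exact hGN a ha hwa _ (.of_forall fun z => ((hsummable z).2 has).hasSum)
  · -- Every mode has modulus one, so the series then diverges at every point and `∑'` is `0`.
    simp [fun z => tsum_eq_zero_of_not_summable (mt (hsummable z).1 has)]

theorem stmt_9_general :
    (∀ s : ℝ, 0 < s → s < 1 → ∀ a : ℤ × ℤ → ℂ,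
      (∀ j k : ℤ, (2 * j = k ∨ 2 * j = -k) → a (j, k) = 0) →
      Summable (fun q => dalembertWeight q * ‖a q‖ ^ 2) →
      √(∑' q, dalembertWeight q ^ s * ‖a q‖ ^ 2) ≤
        √(∑' q, ‖a q‖ ^ 2) ^ (1 - s) * √(∑' q, dalembertWeight q * ‖a q‖ ^ 2) ^ s) ∧
    (∀ p θ : ℝ, 2 < p → (p - 2) / p < θ → θ < 1 → ∃ c > 0, ∀ a : ℤ × ℤ → ℂ,
      (∀ j k : ℤ, (2 * j = k ∨ 2 * j = -k) → a (j, k) = 0) →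
      Summable (fun q => dalembertWeight q * ‖a q‖ ^ 2) →
      ∀ f : ℝ × ℝ → ℂ, (∀ x t : ℝ, f (x, t) = ∑' q, a q * torusMode q (x, t)) →
        ∫ z in periodCell, ‖f z‖ ^ p ≤
          (c * √(∑' q, ‖a q‖ ^ 2) ^ (1 - θ) *
            √(∑' q, dalembertWeight q * ‖a q‖ ^ 2) ^ θ) ^ p) := by
  have hsupport : ∀ {a : ℤ × ℤ → ℂ}, (∀ j k : ℤ, (2 * j = k ∨ 2 * j = -k) → a (j, k) = 0) →
      ∀ q, a q ≠ 0 → 1 ≤ dalembertWeight q :=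
    fun ha q hq => one_le_dalembertWeight (mt (ha q.1 q.2) hq)
  refine ⟨fun s hs0 hs1 a ha hwa => ?_, fun p θ hp hθ hθ1 => ?_⟩
  · have ha2 : Summable fun q => ‖a q‖ ^ 2 := summable_norm_sq_of_one_le_weight
      (fun q hq => hsupport ha q (norm_ne_zero_iff.1 hq)) hwa
    exact (summable_weight_rpow_mul_and_sqrt_tsum_le dalembertWeight_nonneg ha2 hwa hs0 hs1).2
  · obtain ⟨c, hc, hGN⟩ := exists_eLpNorm_tsum_torusMode_le hp hθ hθ1
    refine ⟨c, hc, fun a ha hwa f hf => integral_norm_rpow_le_of_eLpNorm_le (by linarith)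
      (by positivity) ?_⟩
    obtain rfl : f = fun z => ∑' q, a q * torusMode q z := funext fun z => hf z.1 z.2
    exact hGN a (hsupport ha) hwa

/-- Interpolation ‖f‖_{E^s} ≤ ‖f‖_{L²}^{1−s} ‖f‖_{E¹}^{s}, and the resulting
Gagliardo–Nirenberg inequality ‖f‖_{L^p} ≤ c(p) ‖f‖_{L²}^{1−s(p)} ‖f‖_{E¹}^{s(p)}. -/
theorem stmt_9 :
    (∀ s : ℝ, 0 < s → s < 1 → ∀ fh : ℤ × ℤ → ℂ,
      (∀ j k : ℤ, (2 * j = k ∨ 2 * j = -k) → fh (j, k) = 0) →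
      Summable (fun jk : ℤ × ℤ =>
        ((|jk.2 ^ 2 - 4 * jk.1 ^ 2| : ℤ) : ℝ) * ‖fh jk‖ ^ 2) →
      Real.sqrt (∑' jk : ℤ × ℤ, ((|jk.2 ^ 2 - 4 * jk.1 ^ 2| : ℤ) : ℝ) ^ s * ‖fh jk‖ ^ 2) ≤
        Real.sqrt (∑' jk : ℤ × ℤ, ‖fh jk‖ ^ 2) ^ (1 - s) *
        Real.sqrt (∑' jk : ℤ × ℤ,
          ((|jk.2 ^ 2 - 4 * jk.1 ^ 2| : ℤ) : ℝ) * ‖fh jk‖ ^ 2) ^ s) ∧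
    (∀ p : ℝ, 2 < p → ∃ c > 0, ∀ fh : ℤ × ℤ → ℂ,
      (∀ j k : ℤ, (2 * j = k ∨ 2 * j = -k) → fh (j, k) = 0) →
      Summable (fun jk : ℤ × ℤ =>
        ((|jk.2 ^ 2 - 4 * jk.1 ^ 2| : ℤ) : ℝ) * ‖fh jk‖ ^ 2) →
      ∀ f : ℝ × ℝ → ℂ,
        (∀ x t : ℝ, f (x, t) = ∑' jk : ℤ × ℤ,
          fh jk * Complex.exp (Complex.I * (2 * jk.1 * x + jk.2 * t))) →
        ∫ z in Set.Icc (0 : ℝ) Real.pi ×ˢ Set.Icc (0 : ℝ) (2 * Real.pi), ‖f z‖ ^ p ≤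
          (c * Real.sqrt (∑' jk : ℤ × ℤ, ‖fh jk‖ ^ 2) ^ (1 - (p - 2) / (p - 1)) *
            Real.sqrt (∑' jk : ℤ × ℤ,
              ((|jk.2 ^ 2 - 4 * jk.1 ^ 2| : ℤ) : ℝ) * ‖fh jk‖ ^ 2) ^ ((p - 2) / (p - 1))) ^ p) := by
  exact ⟨stmt_9_general.1, fun p hp => stmt_9_general.2 p _ hp
    (div_lt_div_of_pos_left (by linarith) (by linarith) (by linarith))
    ((div_lt_one (by linarith)).2 (by linarith))⟩
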